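/- Let 0 < A ≤ B < ∞. The family {f_{i,m} : i ∈ I, m ∈ ℤ^r} is a Riesz family in L²(𝕋^r, H) with constants A and B if and only if for a.e. σ ∈ 𝕋^r the family {g_i(σ) : i ∈ I} is a Riesz family in H with the same constants A and B. -/

import Mathlib

open MeasureTheory
open scoped ENNReal NNReal

noncomputable section

/-- The unit cube `[0,1)^r` in `ℝ^r`. -/
def cube (r : ℕ) : Set (Fin r → ℝ) := Set.univ.pi fun _ => Set.Ico (0 : ℝ) 1

/-- Lebesgue measure on the torus `𝕋^r`, identified with the cube `[0,1)^r`. -/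
def torusMeasure (r : ℕ) : Measure (Fin r → ℝ) := volume.restrict (cube r)

/-- The character `e_m(σ) = exp(2πi⟨m,σ⟩)` on `𝕋^r`. -/
def char {r : ℕ} (m : Fin r → ℤ) (σ : Fin r → ℝ) : ℂ :=
  Complex.exp (2 * (Real.pi : ℂ) * Complex.I * ∑ j, (m j : ℂ) * (σ j : ℂ))

lemma cube_measurable (r : ℕ) : MeasurableSet (cube r) :=
  MeasurableSet.univ_pi fun _ => measurableSet_Ico

lemma torusMeasure_eq (r : ℕ) :
    torusMeasure r = Measure.pi (fun _ : Fin r => (volume : Measure ℝ).restrict (Set.Ico 0 1)) := by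
  rw [torusMeasure, cube, volume_pi, Measure.restrict_pi_pi]

instance torus_prob (r : ℕ) : IsProbabilityMeasure (torusMeasure r) := by
  have : IsProbabilityMeasure ((volume : Measure ℝ).restrict (Set.Ico 0 1)) := ⟨by simp⟩
  rw [torusMeasure_eq]; infer_instance

lemma lp_norm_sq {α E : Type*} [MeasurableSpace α] [NormedAddCommGroup E] {μ : Measure α}
    (u : Lp E 2 μ) : ENNReal.ofReal (‖u‖ ^ 2) = ∫⁻ x, ‖u x‖ₑ ^ 2 ∂μ := by
  rw [ENNReal.ofReal_pow (norm_nonneg _), ofReal_norm, Lp.enorm_def,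
    eLpNorm_eq_lintegral_rpow_enorm_toReal (by norm_num) (by norm_num), ← ENNReal.rpow_natCast,
    ← ENNReal.rpow_mul]
  simp

lemma char_cont {r : ℕ} (m : Fin r → ℤ) : Continuous (char m) := by
  unfold char; fun_prop

lemma char_eq_prod {r : ℕ} (m : Fin r → ℤ) (σ : Fin r → ℝ) :
    char m σ = ∏ j, Complex.exp (2 * (Real.pi : ℂ) * Complex.I * ((m j : ℂ) * (σ j : ℂ))) := by
  rw [char, Finset.mul_sum, Complex.exp_sum]

lemma char_norm {r : ℕ} (m : Fin r → ℤ) (σ : Fin r → ℝ) : ‖char m σ‖ = 1 := by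
  rw [char_eq_prod, norm_prod]
  refine Finset.prod_eq_one fun j _ => ?_
  rw [show (2 * (Real.pi : ℂ) * Complex.I * ((m j : ℂ) * (σ j : ℂ)))
    = ((2 * Real.pi * (m j * σ j) : ℝ) : ℂ) * Complex.I by push_cast; ring]
  exact Complex.norm_exp_ofReal_mul_I _

lemma char_conj_mul {r : ℕ} (m n : Fin r → ℤ) (σ : Fin r → ℝ) :
    char n σ * (starRingEnd ℂ) (char m σ) = char (n - m) σ := by
  simp only [char]
  rw [← Complex.exp_conj, ← Complex.exp_add]
  congr 1
  simp only [map_mul, map_sum, Complex.conj_ofReal, Complex.conj_I, map_ofNat, map_intCast,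
    Pi.sub_apply, Int.cast_sub, sub_mul, Finset.sum_sub_distrib]
  ring

lemma int_one (k : ℤ) :
    ∫ x in Set.Ico (0:ℝ) 1, Complex.exp (2 * (Real.pi : ℂ) * Complex.I * ((k : ℂ) * (x : ℂ)))
      = if k = 0 then 1 else 0 := by
  rw [integral_Ico_eq_integral_Ioc, ← intervalIntegral.integral_of_le zero_le_one]
  split_ifs with h
  · simp [h]
  · have hc : 2 * (Real.pi : ℂ) * Complex.I * (k : ℂ) ≠ 0 := by
      simp [h, Real.pi_ne_zero]
    simp_rw [← mul_assoc]
    rw [integral_exp_mul_complex hc]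
    have : Complex.exp (2 * (Real.pi : ℂ) * Complex.I * (k : ℂ)) = 1 := by
      rw [mul_comm]; exact Complex.exp_int_mul_two_pi_mul_I k
    simp [this]

lemma int_char {r : ℕ} (m : Fin r → ℤ) :
    ∫ σ, char m σ ∂(torusMeasure r) = if m = 0 then 1 else 0 := by
  simp_rw [char_eq_prod]
  rw [torusMeasure_eq, integral_fintype_prod_eq_prod
    (f := fun j (x : ℝ) => Complex.exp (2 * (Real.pi : ℂ) * Complex.I * ((m j : ℂ) * (x : ℂ))))]
  simp_rw [int_one]
  split_ifs with h
  · simp [h]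
  · obtain ⟨i, hi⟩ := Function.ne_iff.mp h
    exact Finset.prod_eq_zero (Finset.mem_univ i) (by simpa using hi)

lemma char_memLp {r : ℕ} (m : Fin r → ℤ) : MemLp (char m) 2 (torusMeasure r) :=
  MemLp.of_bound (char_cont m).aestronglyMeasurable 1
    (Filter.Eventually.of_forall fun σ => (char_norm m σ).le)

lemma char_orth (r : ℕ) :
    Orthonormal ℂ (fun m : Fin r → ℤ => (char_memLp m).toLp (char m)) := by
  rw [orthonormal_iff_ite]
  intro m n
  rw [L2.inner_def]
  have : ∫ σ, inner ℂ ((char_memLp m).toLp (char m) σ) ((char_memLp n).toLp (char n) σ)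
      ∂(torusMeasure r) = ∫ σ, char (n - m) σ ∂(torusMeasure r) := by
    refine integral_congr_ae ?_
    filter_upwards [(char_memLp m).coeFn_toLp, (char_memLp n).coeFn_toLp] with σ h1 h2
    rw [h1, h2, RCLike.inner_apply, char_conj_mul]
  rw [this, int_char]
  simp only [sub_eq_zero, eq_comm]

lemma parseval {r : ℕ} (S : Finset (Fin r → ℤ)) (b : (Fin r → ℤ) → ℂ) :
    ∫⁻ σ, ‖∑ m ∈ S, b m * char m σ‖ₑ ^ 2 ∂(torusMeasure r)
      = ENNReal.ofReal (∑ m ∈ S, ‖b m‖ ^ 2) := by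
  have h1 : ‖∑ m ∈ S, b m • (char_memLp m).toLp (char m)‖ ^ 2 = ∑ m ∈ S, ‖b m‖ ^ 2 := by
    have := (char_orth r).inner_sum b b S
    rw [inner_self_eq_norm_sq_to_K] at this
    have h2 : ∀ z : ℂ, (starRingEnd ℂ) z * z = ((‖z‖ ^ 2 : ℝ) : ℂ) := fun z => by
      rw [mul_comm, Complex.mul_conj, Complex.normSq_eq_norm_sq]
    simp_rw [h2] at this
    refine Complex.ofReal_injective ?_
    push_cast at this ⊢
    simpa using this
  rw [← h1, lp_norm_sq]
  refine lintegral_congr_ae ?_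
  have h3 : ∀ᵐ σ ∂(torusMeasure r), ∀ m ∈ S,
      (b m • (char_memLp m).toLp (char m) : Lp ℂ 2 (torusMeasure r)) σ = b m * char m σ := by
    rw [Finset.eventually_all]
    intro m _
    filter_upwards [(char_memLp m).coeFn_toLp, Lp.coeFn_smul (b m) ((char_memLp m).toLp (char m))]
      with σ h1 h2
    rw [h2, Pi.smul_apply, h1, smul_eq_mul]
  filter_upwards [h3, Lp.coeFn_finsetSum S fun m => b m • (char_memLp m).toLp (char m)] with σ h h'
  rw [h', Finset.sum_apply, Finset.sum_congr rfl h]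

/-- Comparison of finite measures through squares of continuous functions. -/
lemma measure_le_of_sq {X : Type*} [TopologicalSpace X] [CompactSpace X]
    [TopologicalSpace.PseudoMetrizableSpace X] [MeasurableSpace X] [BorelSpace X]
    (μ ν : Measure X) [IsFiniteMeasure μ] [IsFiniteMeasure ν]
    (h : ∀ φ : C(X, ℂ), ∫⁻ x, ‖φ x‖ₑ ^ 2 ∂μ ≤ ∫⁻ x, ‖φ x‖ₑ ^ 2 ∂ν) : μ ≤ ν := by
  have hF : ∀ F : Set X, IsClosed F → μ F ≤ ν F := by
    intro F hF
    have key : ∀ (ρ : Measure X) [IsFiniteMeasure ρ], Filter.Tendsto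
        (fun n => ∫⁻ x, (hF.apprSeq n x : ℝ≥0∞) ^ 2 ∂ρ) Filter.atTop (nhds (ρ F)) := by
      intro ρ _
      have : ρ F = ∫⁻ x, F.indicator (fun _ => (1 : ℝ≥0∞)) x ∂ρ := by
        rw [lintegral_indicator hF.measurableSet]; simp
      rw [this]
      refine tendsto_lintegral_of_dominated_convergence (fun _ => 1) ?_ ?_ ?_ ?_
      · intro n
        exact ((ENNReal.continuous_coe.comp (hF.apprSeq n).continuous).measurable).pow_const 2
      · intro n
        refine Filter.Eventually.of_forall fun x => ?_
        have := HasOuterApproxClosed.apprSeq_apply_le_one hF n x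
        exact pow_le_one₀ (zero_le) (by exact_mod_cast this)
      · simp
      · refine Filter.Eventually.of_forall fun x => ?_
        have h1 := (tendsto_pi_nhds.1 (HasOuterApproxClosed.tendsto_apprSeq hF)) x
        have h2 := (ENNReal.continuous_pow 2).continuousAt.tendsto.comp
          (ENNReal.tendsto_coe.2 h1)
        refine (h2.congr fun n => rfl).trans (le_of_eq ?_)
        by_cases hx : x ∈ F <;> simp [hx]
    refine le_of_tendsto_of_tendsto' (key μ) (key ν) fun n => ?_
    have := h ⟨fun x => ((hF.apprSeq n x : ℝ) : ℂ), by
      exact Complex.continuous_ofReal.comp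
        (NNReal.continuous_coe.comp (hF.apprSeq n).continuous)⟩
    have h3 : ∀ y : ℝ≥0, ‖((y : ℝ) : ℂ)‖ₑ = (y : ℝ≥0∞) := fun y => by
      rw [← ofReal_norm]; simp
    simpa only [ContinuousMap.coe_mk, h3] using this
  refine Measure.le_iff.2 fun s hs => ?_
  rw [hs.measure_eq_iSup_isClosed_of_ne_top (measure_ne_top μ s)]
  exact iSup_le fun K => iSup_le fun hK => iSup_le fun hKc =>
    (hF K hKc).trans (measure_mono hK)

lemma lint_eq {X : Type*} [TopologicalSpace X] [CompactSpace X]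
    [MeasurableSpace X] [BorelSpace X] (μ : Measure X) [IsFiniteMeasure μ] (φ : C(X, ℂ)) :
    ∫⁻ x, ‖φ x‖ₑ ^ 2 ∂μ = ENNReal.ofReal (‖ContinuousMap.toLp 2 μ ℂ φ‖ ^ 2) := by
  rw [lp_norm_sq]
  refine lintegral_congr_ae ?_
  filter_upwards [ContinuousMap.coeFn_toLp (p := 2) (𝕜 := ℂ) μ φ] with x hx
  rw [hx]

lemma measure_le_of_dense {X : Type*} [TopologicalSpace X] [CompactSpace X]
    [TopologicalSpace.PseudoMetrizableSpace X] [MeasurableSpace X] [BorelSpace X]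
    (μ ν : Measure X) [IsFiniteMeasure μ] [IsFiniteMeasure ν] (D : Set C(X, ℂ)) (hD : Dense D)
    (h : ∀ φ ∈ D, ∫⁻ x, ‖φ x‖ₑ ^ 2 ∂μ ≤ ∫⁻ x, ‖φ x‖ₑ ^ 2 ∂ν) : μ ≤ ν := by
  refine measure_le_of_sq μ ν fun φ => ?_
  refine hD.induction (P := fun φ => ∫⁻ x, ‖φ x‖ₑ ^ 2 ∂μ ≤ ∫⁻ x, ‖φ x‖ₑ ^ 2 ∂ν) h ?_ φ
  simp_rw [lint_eq]
  refine isClosed_le ?_ ?_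
  · exact ENNReal.continuous_ofReal.comp
      (((ContinuousMap.toLp 2 μ ℂ).continuous.norm).pow 2)
  · exact ENNReal.continuous_ofReal.comp
      (((ContinuousMap.toLp 2 ν ℂ).continuous.norm).pow 2)

/-- The quotient map to the torus. -/
def qmap (r : ℕ) (σ : Fin r → ℝ) : UnitAddTorus (Fin r) := fun j => ((σ j : ℝ) : UnitAddCircle)

lemma qmap_cont (r : ℕ) : Continuous (qmap r) :=
  continuous_pi fun j => (AddCircle.continuous_mk' 1).comp (continuous_apply j)

lemma qmap_inj (r : ℕ) : Set.InjOn (qmap r) (cube r) := by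
  intro x hx y hy h
  ext j
  have hj := congrFun h j
  have h1 := hx j (Set.mem_univ j)
  have h2 := hy j (Set.mem_univ j)
  exact (AddCircle.coe_eq_coe_iff_of_mem_Ico (p := 1) (a := 0)
    (by simpa using h1) (by simpa using h2)).1 hj

lemma mFourier_qmap {r : ℕ} (m : Fin r → ℤ) (σ : Fin r → ℝ) :
    UnitAddTorus.mFourier m (qmap r σ) = char m σ := by
  rw [char_eq_prod]
  simp only [UnitAddTorus.mFourier, ContinuousMap.coe_mk, qmap, fourier_coe_apply]
  refine Finset.prod_congr rfl fun j _ => ?_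
  congr 1
  push_cast
  ring

lemma ae_le_of_trig {r : ℕ} (F G : (Fin r → ℝ) → ℝ≥0∞)
    (hF : AEMeasurable F (torusMeasure r)) (hG : AEMeasurable G (torusMeasure r))
    (hFi : ∫⁻ σ, F σ ∂(torusMeasure r) ≠ ∞) (hGi : ∫⁻ σ, G σ ∂(torusMeasure r) ≠ ∞)
    (h : ∀ (S : Finset (Fin r → ℤ)) (b : (Fin r → ℤ) → ℂ),
      ∫⁻ σ, F σ * ‖∑ m ∈ S, b m * char m σ‖ₑ ^ 2 ∂(torusMeasure r) ≤
      ∫⁻ σ, G σ * ‖∑ m ∈ S, b m * char m σ‖ₑ ^ 2 ∂(torusMeasure r)) :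
    F ≤ᵐ[torusMeasure r] G := by
  have := isFiniteMeasure_withDensity hFi
  have := isFiniteMeasure_withDensity hGi
  have hq := (qmap_cont r).measurable
  have hle : ((torusMeasure r).withDensity F).map (qmap r) ≤
      ((torusMeasure r).withDensity G).map (qmap r) := by
    refine measure_le_of_dense _ _
      (Submodule.span ℂ (Set.range (UnitAddTorus.mFourier (d := Fin r))) : Set _) ?_ ?_
    · exact Submodule.dense_iff_topologicalClosure_eq_top.2
        UnitAddTorus.span_mFourier_closure_eq_top
    · intro φ hφ
      obtain ⟨b, rfl⟩ := (Finsupp.mem_span_range_iff_exists_finsupp).1 hφ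
      have hm : ∀ φ : C(UnitAddTorus (Fin r), ℂ), Measurable fun x => ‖φ x‖ₑ ^ 2 := fun φ =>
        (φ.continuous.enorm.measurable).pow_const 2
      have hm2 : ∀ φ : C(UnitAddTorus (Fin r), ℂ), Measurable fun σ => ‖φ (qmap r σ)‖ₑ ^ 2 :=
        fun φ => (hm φ).comp hq
      rw [lintegral_map (hm _) hq, lintegral_map (hm _) hq,
        lintegral_withDensity_eq_lintegral_mul₀ hF (hm2 _).aemeasurable,
        lintegral_withDensity_eq_lintegral_mul₀ hG (hm2 _).aemeasurable]
      simpa [Finsupp.sum, mFourier_qmap] using h b.support b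
  refine ae_le_of_forall_setLIntegral_le_of_sigmaFinite₀ hF fun s hs _ => ?_
  have hE : MeasurableSet (qmap r '' (s ∩ cube r)) :=
    (hs.inter (cube_measurable r)).image_of_measurable_injOn hq
      ((qmap_inj r).mono Set.inter_subset_right)
  have h1 := hle (qmap r '' (s ∩ cube r))
  rw [Measure.map_apply hq hE, Measure.map_apply hq hE, withDensity_apply _ (hq hE),
    withDensity_apply _ (hq hE)] at h1
  have h2 : s =ᵐ[torusMeasure r] (qmap r ⁻¹' (qmap r '' (s ∩ cube r)) : Set _) := by
    have : ∀ᵐ σ ∂(torusMeasure r), σ ∈ cube r := ae_restrict_mem (cube_measurable r)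
    filter_upwards [this] with σ hσ
    refine propext ⟨fun hs => ⟨σ, ⟨hs, hσ⟩, rfl⟩, ?_⟩
    rintro ⟨y, ⟨hy, hyc⟩, hyx⟩
    have := qmap_inj r hyc hσ hyx
    exact this ▸ hy
  rwa [setLIntegral_congr h2, setLIntegral_congr h2]

lemma norm_sum_eq {r : ℕ} {H : Type} [NormedAddCommGroup H] [InnerProductSpace ℂ H]
    {I : Type} (g : I → Lp H 2 (torusMeasure r))
    (f : I × (Fin r → ℤ) → Lp H 2 (torusMeasure r))
    (hf : ∀ (i : I) (m : Fin r → ℤ),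
      ⇑(f (i, m)) =ᵐ[torusMeasure r] fun σ => char m σ • ⇑(g i) σ)
    (t : Finset I) (M : Finset (Fin r → ℤ)) (a : I × (Fin r → ℤ) → ℂ) :
    ENNReal.ofReal (‖∑ p ∈ t ×ˢ M, a p • f p‖ ^ 2) =
      ∫⁻ σ, ‖∑ i ∈ t, (∑ m ∈ M, a (i, m) * char m σ) • (g i) σ‖ₑ ^ 2 ∂(torusMeasure r) := by
  rw [lp_norm_sq]
  refine lintegral_congr_ae ?_
  have h3 : ∀ᵐ σ ∂(torusMeasure r), ∀ p ∈ t ×ˢ M,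
      (a p • f p : Lp H 2 (torusMeasure r)) σ = (a p * char p.2 σ) • (g p.1) σ := by
    rw [Finset.eventually_all]
    intro p _
    filter_upwards [hf p.1 p.2, Lp.coeFn_smul (a p) (f p)] with σ h1 h2
    rw [h2, Pi.smul_apply, h1, mul_smul]
  filter_upwards [h3, Lp.coeFn_finsetSum (t ×ˢ M) fun p => a p • f p] with σ h h'
  rw [h', Finset.sum_apply, Finset.sum_congr rfl h, Finset.sum_product]
  simp_rw [Finset.sum_smul]

lemma enorm_sq_eq {E : Type*} [NormedAddCommGroup E] (x : E) :
    ‖x‖ₑ ^ 2 = ENNReal.ofReal (‖x‖ ^ 2) := by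
  rw [ENNReal.ofReal_pow (norm_nonneg _), ofReal_norm]

/-- **Characterization of Riesz families (transform side).** The family `{f_{i,m}}`,
`f_{i,m}(σ) = e_m(σ) g_i(σ)`, is a Riesz family in `L²(𝕋^r, H)` with constants `A, B` iff
for a.e. `σ` the family `{g_i(σ)}` is a Riesz family in `H` with the same constants. -/
theorem riesz_characterization (r : ℕ) (hr : 0 < r)
    {H : Type} [NormedAddCommGroup H] [InnerProductSpace ℂ H] [CompleteSpace H]
    [TopologicalSpace.SeparableSpace H]
    {I : Type} [Countable I]
    (g : I → Lp H 2 (torusMeasure r))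
    (f : I × (Fin r → ℤ) → Lp H 2 (torusMeasure r))
    (hf : ∀ (i : I) (m : Fin r → ℤ),
      ⇑(f (i, m)) =ᵐ[torusMeasure r] fun σ => char m σ • ⇑(g i) σ)
    (A B : ℝ) (hA : 0 < A) (hAB : A ≤ B) :
    (∀ (s : Finset (I × (Fin r → ℤ))) (a : I × (Fin r → ℤ) → ℂ),
      A * ∑ p ∈ s, ‖a p‖ ^ 2 ≤ ‖∑ p ∈ s, a p • f p‖ ^ 2 ∧
      ‖∑ p ∈ s, a p • f p‖ ^ 2 ≤ B * ∑ p ∈ s, ‖a p‖ ^ 2) ↔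
    (∀ᵐ σ ∂(torusMeasure r), ∀ (t : Finset I) (c : I → ℂ),
      A * ∑ i ∈ t, ‖c i‖ ^ 2 ≤ ‖∑ i ∈ t, c i • ⇑(g i) σ‖ ^ 2 ∧
      ‖∑ i ∈ t, c i • ⇑(g i) σ‖ ^ 2 ≤ B * ∑ i ∈ t, ‖c i‖ ^ 2) := by
  have hB : 0 < B := hA.trans_le hAB
  constructor
  · intro h
    have main : ∀ (t : Finset I) (c : I → ℂ), ∀ᵐ σ ∂(torusMeasure r),
        A * ∑ i ∈ t, ‖c i‖ ^ 2 ≤ ‖∑ i ∈ t, c i • ⇑(g i) σ‖ ^ 2 ∧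
        ‖∑ i ∈ t, c i • ⇑(g i) σ‖ ^ 2 ≤ B * ∑ i ∈ t, ‖c i‖ ^ 2 := by
      intro t c
      have hC : 0 ≤ ∑ i ∈ t, ‖c i‖ ^ 2 := Finset.sum_nonneg fun i _ => by positivity
      set G : (Fin r → ℝ) → ℝ≥0∞ := fun σ => ‖∑ i ∈ t, c i • ⇑(g i) σ‖ₑ ^ 2 with hGdef
      have hu : (⇑(∑ i ∈ t, c i • g i : Lp H 2 (torusMeasure r))) =ᵐ[torusMeasure r]
          fun σ => ∑ i ∈ t, c i • ⇑(g i) σ := by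
        have h3 : ∀ᵐ σ ∂(torusMeasure r), ∀ i ∈ t,
            (c i • g i : Lp H 2 (torusMeasure r)) σ = c i • (g i) σ := by
          rw [Finset.eventually_all]
          intro i _
          filter_upwards [Lp.coeFn_smul (c i) (g i)] with σ h2
          rw [h2, Pi.smul_apply]
        filter_upwards [h3, Lp.coeFn_finsetSum t fun i => c i • g i] with σ h h'
        rw [h', Finset.sum_apply, Finset.sum_congr rfl h]
      have hGm : AEMeasurable G (torusMeasure r) :=
        (((Lp.aestronglyMeasurable _).congr hu).enorm).pow_const 2
      have hGi : ∫⁻ σ, G σ ∂(torusMeasure r) ≠ ∞ := by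
        have := lp_norm_sq (∑ i ∈ t, c i • g i)
        have h2 : ∫⁻ σ, G σ ∂(torusMeasure r) =
            ∫⁻ σ, ‖(∑ i ∈ t, c i • g i : Lp H 2 (torusMeasure r)) σ‖ₑ ^ 2 ∂(torusMeasure r) := by
          refine lintegral_congr_ae ?_
          filter_upwards [hu] with σ hσ
          rw [hσ]
        rw [h2, ← this]
        exact ENNReal.ofReal_ne_top
      have hmid : ∀ (S : Finset (Fin r → ℤ)) (b : (Fin r → ℤ) → ℂ),
          ∫⁻ σ, G σ * ‖∑ m ∈ S, b m * char m σ‖ₑ ^ 2 ∂(torusMeasure r) =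
          ENNReal.ofReal (‖∑ p ∈ t ×ˢ S, (c p.1 * b p.2) • f p‖ ^ 2) := by
        intro S b
        rw [norm_sum_eq g f hf t S (fun p => c p.1 * b p.2)]
        refine lintegral_congr fun σ => ?_
        rw [hGdef, ← mul_pow, mul_comm, ← enorm_smul, Finset.smul_sum]
        congr 2
        refine Finset.sum_congr rfl fun i _ => ?_
        rw [smul_smul, mul_comm, Finset.mul_sum]
        simp_rw [mul_assoc]
      have hside : ∀ (K : ℝ), 0 ≤ K → ∀ (S : Finset (Fin r → ℤ)) (b : (Fin r → ℤ) → ℂ),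
          ∫⁻ σ, ENNReal.ofReal (K * ∑ i ∈ t, ‖c i‖ ^ 2) * ‖∑ m ∈ S, b m * char m σ‖ₑ ^ 2
            ∂(torusMeasure r) =
          ENNReal.ofReal (K * ∑ p ∈ t ×ˢ S, ‖c p.1 * b p.2‖ ^ 2) := by
        intro K hK S b
        rw [lintegral_const_mul' _ _ ENNReal.ofReal_ne_top, parseval,
          ← ENNReal.ofReal_mul (by positivity), Finset.sum_product, mul_assoc, Finset.sum_mul_sum]
        simp_rw [norm_mul, mul_pow]
      have hconst : ∀ K : ℝ, ∫⁻ _, ENNReal.ofReal K ∂(torusMeasure r) ≠ ∞ := by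
        intro K; simp
      have e1 := ae_le_of_trig (fun _ => ENNReal.ofReal (A * ∑ i ∈ t, ‖c i‖ ^ 2)) G
        aemeasurable_const hGm (hconst _) hGi (fun S b => by
          rw [hside A hA.le, hmid]
          exact ENNReal.ofReal_le_ofReal (h (t ×ˢ S) fun p => c p.1 * b p.2).1)
      have e2 := ae_le_of_trig G (fun _ => ENNReal.ofReal (B * ∑ i ∈ t, ‖c i‖ ^ 2))
        hGm aemeasurable_const hGi (hconst _) (fun S b => by
          rw [hside B hB.le, hmid]
          exact ENNReal.ofReal_le_ofReal (h (t ×ˢ S) fun p => c p.1 * b p.2).2)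
      filter_upwards [e1, e2] with σ h1 h2
      simp only [hGdef, enorm_sq_eq] at h1 h2
      exact ⟨(ENNReal.ofReal_le_ofReal_iff (by positivity)).1 h1,
        (ENNReal.ofReal_le_ofReal_iff (by positivity)).1 h2⟩
    have main2 : ∀ᵐ σ ∂(torusMeasure r), ∀ (t : Finset I) (n : ℕ),
        A * ∑ i ∈ t, ‖TopologicalSpace.denseSeq (I → ℂ) n i‖ ^ 2 ≤
          ‖∑ i ∈ t, TopologicalSpace.denseSeq (I → ℂ) n i • ⇑(g i) σ‖ ^ 2 ∧
        ‖∑ i ∈ t, TopologicalSpace.denseSeq (I → ℂ) n i • ⇑(g i) σ‖ ^ 2 ≤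
          B * ∑ i ∈ t, ‖TopologicalSpace.denseSeq (I → ℂ) n i‖ ^ 2 := by
      rw [ae_all_iff]; intro t
      rw [ae_all_iff]; intro n
      exact main t _
    filter_upwards [main2] with σ hσ t c
    refine (TopologicalSpace.denseRange_denseSeq (I → ℂ)).induction_on
      (p := fun c => A * ∑ i ∈ t, ‖c i‖ ^ 2 ≤ ‖∑ i ∈ t, c i • ⇑(g i) σ‖ ^ 2 ∧
        ‖∑ i ∈ t, c i • ⇑(g i) σ‖ ^ 2 ≤ B * ∑ i ∈ t, ‖c i‖ ^ 2) c ?_ (hσ t)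
    have c1 : Continuous fun c : I → ℂ => ∑ i ∈ t, ‖c i‖ ^ 2 := by fun_prop
    have c2 : Continuous fun c : I → ℂ => ‖∑ i ∈ t, c i • ⇑(g i) σ‖ ^ 2 := by fun_prop
    exact (isClosed_le (c1.const_mul A) c2).inter (isClosed_le c2 (c1.const_mul B))
  · intro h
    have main : ∀ (t : Finset I) (M : Finset (Fin r → ℤ)) (a : I × (Fin r → ℤ) → ℂ),
        A * ∑ p ∈ t ×ˢ M, ‖a p‖ ^ 2 ≤ ‖∑ p ∈ t ×ˢ M, a p • f p‖ ^ 2 ∧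
        ‖∑ p ∈ t ×ˢ M, a p • f p‖ ^ 2 ≤ B * ∑ p ∈ t ×ˢ M, ‖a p‖ ^ 2 := by
      intro t M a
      have hside : ∀ K : ℝ, 0 ≤ K → ENNReal.ofReal (K * ∑ p ∈ t ×ˢ M, ‖a p‖ ^ 2) =
          ∫⁻ σ, ENNReal.ofReal (K * ∑ i ∈ t, ‖∑ m ∈ M, a (i, m) * char m σ‖ ^ 2)
            ∂(torusMeasure r) := by
        intro K hK
        simp_rw [ENNReal.ofReal_mul hK]
        rw [lintegral_const_mul' _ _ ENNReal.ofReal_ne_top, Finset.sum_product]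
        congr 1
        rw [ENNReal.ofReal_sum_of_nonneg (fun i _ => Finset.sum_nonneg fun m _ => by positivity)]
        have : ∀ σ : Fin r → ℝ, ENNReal.ofReal (∑ i ∈ t, ‖∑ m ∈ M, a (i, m) * char m σ‖ ^ 2) =
            ∑ i ∈ t, ‖∑ m ∈ M, a (i, m) * char m σ‖ₑ ^ 2 := fun σ => by
          rw [ENNReal.ofReal_sum_of_nonneg (fun i _ => by positivity)]
          simp_rw [enorm_sq_eq]
        simp_rw [this]
        rw [lintegral_finsetSum]
        · exact Finset.sum_congr rfl fun i _ => (parseval M fun m => a (i, m)).symm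
        · intro i _
          have : Continuous fun σ : Fin r → ℝ => ∑ m ∈ M, a (i, m) * char m σ :=
            continuous_finset_sum _ fun m _ => continuous_const.mul (char_cont m)
          exact (this.enorm.measurable).pow_const 2
      constructor
      · rw [← ENNReal.ofReal_le_ofReal_iff (by positivity), hside A hA.le, norm_sum_eq g f hf]
        refine lintegral_mono_ae ?_
        filter_upwards [h] with σ hσ
        rw [enorm_sq_eq]
        exact ENNReal.ofReal_le_ofReal (hσ t fun i => ∑ m ∈ M, a (i, m) * char m σ).1
      · rw [← ENNReal.ofReal_le_ofReal_iff (by positivity), hside B hB.le, norm_sum_eq g f hf]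
        refine lintegral_mono_ae ?_
        filter_upwards [h] with σ hσ
        rw [enorm_sq_eq]
        exact ENNReal.ofReal_le_ofReal (hσ t fun i => ∑ m ∈ M, a (i, m) * char m σ).2
    intro s a
    classical
    have hsub : s ⊆ s.image Prod.fst ×ˢ s.image Prod.snd := Finset.subset_product
    have := main (s.image Prod.fst) (s.image Prod.snd) (fun p => if p ∈ s then a p else 0)
    have e1 : ∑ p ∈ s.image Prod.fst ×ˢ s.image Prod.snd, ‖if p ∈ s then a p else 0‖ ^ 2 =
        ∑ p ∈ s, ‖a p‖ ^ 2 := by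
      rw [← Finset.sum_subset hsub]
      · exact Finset.sum_congr rfl fun p hp => by simp [hp]
      · intro p _ hp; simp [hp]
    have e2 : ∑ p ∈ s.image Prod.fst ×ˢ s.image Prod.snd, (if p ∈ s then a p else 0) • f p =
        ∑ p ∈ s, a p • f p := by
      rw [← Finset.sum_subset hsub]
      · exact Finset.sum_congr rfl fun p hp => by simp [hp]
      · intro p _ hp; simp [hp]
    simp only [e1, e2] at this
    exact this
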